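/- arXiv:math/0412067 — 6 statements merged into one kernel-verified Lean document; each statement's English description precedes it below -/
import Mathlib

section
/- Let q be real with 0 < q < 1, let r ≥ 1 be an integer, let s, t ∈ ℂ with Re(t) > r − 1, and let z ∈ ℂ with Re(z) > 0. Then the multiple series defining ζ_{q,r}(s,t,z) can be rearranged as a single series: ζ_{q,r}(s,t,z) = ∑_{n=0}^{∞} [n+r−1; r−1]_q · q^{n(t−r+1)} / [n+z]_q^s, and both series converge absolutely. -/
/-!
Group the `r`-tuples `f` by their sum `n`, and put `k = r - 1`. On the tuples of sum `n` the
denominator is constant and the numerator is `q^{n(t-k)} · q^{∑ f_i (k-i)}`, so everything rests on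
the generating-function identity `∑_{f_0+⋯+f_k = n} q^{∑ f_i (k-i)} = [n+k; k]_q`, which follows by
induction on `k` from the `q`-Pascal rule.

The single series converges absolutely because `[n+k; k]_q ≤ 1/(q;q)_k`, because `[n+z]_q` tends to
`1/(1-q)`, which lies in the slit plane, so that `1/[n+z]_q^s` is bounded, and because `q^{n(t-k)}`
decays geometrically. The weights `q^{∑ f_i (k-i)}` being nonnegative, the norms over each group add
up to the norm of the grouped term, so the multiple series converges absolutely as well, and
grouping its terms is legitimate.
-/

open Complex

/-- `[w]_q = (1 - q^w)/(1 - q)` for real `0 < q < 1` and complex `w`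
(principal complex power of the positive real `q`). -/
noncomputable def qNum (q : ℝ) (w : ℂ) : ℂ := (1 - (q : ℂ) ^ w) / (1 - (q : ℂ))

/-- The q-Pochhammer symbol `(a;q)_m = ∏_{j=0}^{m-1} (1 - a q^j)`. -/
noncomputable def qPoch (q a : ℝ) (m : ℕ) : ℝ := ∏ j ∈ Finset.range m, (1 - a * q ^ j)

/-- The q-binomial coefficient `[m; n]_q = (q;q)_m / ((q;q)_n (q;q)_{m-n})`. -/
noncomputable def qBinom (q : ℝ) (m n : ℕ) : ℝ :=
  qPoch q q m / (qPoch q q n * qPoch q q (m - n))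

/-- The `q`-analogue `ζ_{q,r}(s,t,z)` of the Barnes multiple zeta function,
defined as a sum over all `r`-tuples `(n₁,…,n_r)` of nonnegative integers of
`q^{n₁ t + n₂(t−1) + ⋯ + n_r(t−r+1)} / [n₁+⋯+n_r+z]_q^s`. -/
noncomputable def zetaQ (q : ℝ) (r : ℕ) (s t z : ℂ) : ℂ :=
  ∑' f : Fin r → ℕ,
    (q : ℂ) ^ (∑ i : Fin r, (f i : ℂ) * (t - (i : ℕ)))
      / (qNum q (((∑ i : Fin r, f i : ℕ) : ℂ) + z)) ^ s

open Filter Finset Topology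
open Finset.Nat (antidiagonalTuple mem_antidiagonalTuple sigmaAntidiagonalTupleEquivTuple)

lemma sum_antidiagonalTuple_succ {M : Type*} [AddCommMonoid M] (k n : ℕ)
    (F : (Fin (k + 1) → ℕ) → M) :
    ∑ f ∈ antidiagonalTuple (k + 1) n, F f =
      ∑ p ∈ antidiagonal n, ∑ g ∈ antidiagonalTuple k p.2, F (Fin.cons p.1 g) := by
  rw [sum_sigma']
  refine sum_bij' (fun f _ => ⟨(f 0, ∑ i, Fin.tail f i), Fin.tail f⟩)
    (fun x _ => Fin.cons x.1.1 x.2) ?_ ?_ ?_ ?_ ?_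
  · intro f hf
    simpa [mem_antidiagonalTuple, Fin.sum_univ_succ, Fin.tail] using hf
  · rintro ⟨⟨a, m⟩, g⟩ h
    obtain ⟨rfl, rfl⟩ : a + m = n ∧ ∑ i, g i = m := by simpa [mem_antidiagonalTuple] using h
    simp [mem_antidiagonalTuple, Fin.sum_univ_succ]
  · simp
  · rintro ⟨⟨a, m⟩, g⟩ h
    obtain ⟨-, rfl⟩ : a + m = n ∧ ∑ i, g i = m := by simpa [mem_antidiagonalTuple] using h
    simp
  · simp

lemma sum_antidiagonalTuple_smul {R M : Type*} [Semiring R] [AddCommMonoid M] [Module R M]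
    (m n : ℕ) (w : (Fin m → ℕ) → R) (c : ℕ → M) :
    ∑ f ∈ antidiagonalTuple m n, w f • c (∑ i, f i) =
      (∑ f ∈ antidiagonalTuple m n, w f) • c n := by
  rw [sum_smul]
  exact sum_congr rfl fun f hf => by rw [mem_antidiagonalTuple.1 hf]

section QBinomial

variable {q : ℝ}

variable (q) in
lemma qPoch_self_succ (m : ℕ) :
    qPoch q q (m + 1) = qPoch q q m * (1 - q ^ (m + 1)) := by
  rw [qPoch, prod_range_succ, ← qPoch, pow_succ']

lemma one_sub_pow_succ_ne_zero (hq : |q| ≠ 1) (m : ℕ) : 1 - q ^ (m + 1) ≠ 0 := by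
  intro h
  have hpow : |q| ^ (m + 1) = 1 := by rw [← abs_pow, ← sub_eq_zero.1 h, abs_one]
  exact hq ((pow_eq_one_iff_of_nonneg (abs_nonneg q) m.succ_ne_zero).1 hpow)

lemma qPoch_self_ne_zero (hq : |q| ≠ 1) (m : ℕ) : qPoch q q m ≠ 0 :=
  prod_ne_zero_iff.2 fun j _ => pow_succ' q j ▸ one_sub_pow_succ_ne_zero hq j

lemma qPoch_self_pos (hq : |q| < 1) (m : ℕ) : 0 < qPoch q q m := by
  refine prod_pos fun j _ => ?_
  rw [← pow_succ', sub_pos]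
  calc q ^ (j + 1) ≤ |q| ^ (j + 1) := (le_abs_self _).trans_eq (abs_pow q _)
    _ < 1 := pow_lt_one₀ (abs_nonneg q) hq j.succ_ne_zero

lemma antitone_qPoch_self (hq0 : 0 ≤ q) (hq1 : q < 1) : Antitone (qPoch q q) := by
  refine antitone_nat_of_succ_le fun m => ?_
  rw [qPoch_self_succ]
  exact mul_le_of_le_one_right (qPoch_self_pos ((abs_of_nonneg hq0).trans_lt hq1) m).le
    (sub_le_self 1 (pow_nonneg hq0 _))

lemma qBinom_nonneg (hq : |q| < 1) (m n : ℕ) : 0 ≤ qBinom q m n :=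
  div_nonneg (qPoch_self_pos hq _).le
    (mul_pos (qPoch_self_pos hq _) (qPoch_self_pos hq _)).le

lemma qBinom_add_le (hq0 : 0 ≤ q) (hq1 : q < 1) (n k : ℕ) :
    qBinom q (n + k) k ≤ (qPoch q q k)⁻¹ := by
  have hpos := qPoch_self_pos ((abs_of_nonneg hq0).trans_lt hq1)
  calc qBinom q (n + k) k = qPoch q q (n + k) / qPoch q q n * (qPoch q q k)⁻¹ := by
        rw [qBinom, Nat.add_sub_cancel, ← div_eq_mul_inv, div_div, mul_comm (qPoch q q k)]
    _ ≤ (qPoch q q k)⁻¹ := mul_le_of_le_one_left (inv_pos.2 (hpos k)).le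
        ((div_le_one (hpos n)).2 (antitone_qPoch_self hq0 hq1 (Nat.le_add_right n k)))

lemma summable_norm_qBinom_smul {E : Type*} [SeminormedAddCommGroup E] [NormedSpace ℝ E]
    (hq0 : 0 ≤ q) (hq1 : q < 1) (k : ℕ) {c : ℕ → E} (hc : Summable (fun n => ‖c n‖)) :
    Summable (fun n => ‖qBinom q (n + k) k • c n‖) := by
  refine (hc.mul_left (qPoch q q k)⁻¹).of_nonneg_of_le (fun _ => norm_nonneg _) fun n => ?_
  rw [norm_smul, Real.norm_of_nonneg (qBinom_nonneg ((abs_of_nonneg hq0).trans_lt hq1) _ _)]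
  exact mul_le_mul_of_nonneg_right (qBinom_add_le hq0 hq1 n k) (norm_nonneg _)

lemma qBinom_zero_right (hq : |q| ≠ 1) (n : ℕ) : qBinom q n 0 = 1 := by
  simpa [qBinom, qPoch] using qPoch_self_ne_zero hq n

lemma qBinom_self (hq : |q| ≠ 1) (n : ℕ) : qBinom q n n = 1 := by
  simpa [qBinom, qPoch] using qPoch_self_ne_zero hq n

lemma qBinom_pascal (hq : |q| ≠ 1) (n k : ℕ) :
    qBinom q (n + 1 + (k + 1)) (k + 1) =
      qBinom q (n + 1 + k) k + q ^ (k + 1) * qBinom q (n + (k + 1)) (k + 1) := by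
  have htop : n + (k + 1) = n + 1 + k := by ring
  simp only [qBinom, Nat.add_sub_cancel]
  rw [← add_assoc (n + 1) k 1, htop]
  simp only [qPoch_self_succ]
  have hk := qPoch_self_ne_zero hq k
  have hn := qPoch_self_ne_zero hq n
  have hk' := one_sub_pow_succ_ne_zero hq k
  have hn' := one_sub_pow_succ_ne_zero hq n
  field_simp
  ring

lemma sum_antidiagonal_pow_mul_qBinom (hq : |q| ≠ 1) (k n : ℕ) :
    ∑ p ∈ antidiagonal n, q ^ (p.1 * (k + 1)) * qBinom q (p.2 + k) k =
      qBinom q (n + (k + 1)) (k + 1) := by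
  induction n with
  | zero => simp [qBinom_self hq]
  | succ n ih =>
    calc ∑ p ∈ antidiagonal (n + 1), q ^ (p.1 * (k + 1)) * qBinom q (p.2 + k) k
        = qBinom q (n + 1 + k) k +
            ∑ p ∈ antidiagonal n, q ^ ((p.1 + 1) * (k + 1)) * qBinom q (p.2 + k) k := by
          simp [Finset.Nat.sum_antidiagonal_succ]
      _ = qBinom q (n + 1 + k) k + q ^ (k + 1) * qBinom q (n + (k + 1)) (k + 1) := by
          rw [← ih, mul_sum]
          congr 1
          exact sum_congr rfl fun p _ => by ring
      _ = qBinom q (n + 1 + (k + 1)) (k + 1) := by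
          rw [qBinom_pascal hq]

-- Writing `i.rev` for `k - i` keeps truncated subtraction out of the exponent.
lemma sum_antidiagonalTuple_pow_sum_mul_rev (hq : |q| ≠ 1) (k n : ℕ) :
    ∑ f ∈ antidiagonalTuple (k + 1) n, q ^ (∑ i, f i * (i.rev : ℕ)) = qBinom q (n + k) k := by
  induction k generalizing n with
  | zero => simp [qBinom_zero_right hq]
  | succ k ih =>
    rw [sum_antidiagonalTuple_succ, ← sum_antidiagonal_pow_mul_qBinom hq]
    refine sum_congr rfl fun p _ => ?_
    rw [← ih, mul_sum]
    refine sum_congr rfl fun g _ => ?_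
    simp [Fin.sum_univ_succ (n := k + 1), pow_add]

end QBinomial

section Grouping

variable {E : Type*} [NormedAddCommGroup E] [NormedSpace ℝ E]
  {m : ℕ} {w : (Fin m → ℕ) → ℝ} {c : ℕ → E}

lemma summable_norm_smul_comp_sum_iff (hw : ∀ f, 0 ≤ w f) :
    Summable (fun f : Fin m → ℕ => ‖w f • c (∑ i, f i)‖) ↔
      Summable (fun n : ℕ => ‖(∑ f ∈ antidiagonalTuple m n, w f) • c n‖) := by
  have hnorm (n : ℕ) : ∑' f : antidiagonalTuple m n, ‖w f • c (∑ i, f.1 i)‖ =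
      ‖(∑ f ∈ antidiagonalTuple m n, w f) • c n‖ := by
    calc ∑' f : antidiagonalTuple m n, ‖w f • c (∑ i, f.1 i)‖
        = ∑ f ∈ antidiagonalTuple m n, w f • ‖c (∑ i, f i)‖ := by
          simp only [norm_smul, Real.norm_of_nonneg (hw _), smul_eq_mul]
          exact Finset.tsum_subtype _ fun f => w f * ‖c (∑ i, f i)‖
      _ = ‖(∑ f ∈ antidiagonalTuple m n, w f) • c n‖ := by
          rw [sum_antidiagonalTuple_smul m n w fun n => ‖c n‖, norm_smul,
            Real.norm_of_nonneg (sum_nonneg fun f _ => hw f), smul_eq_mul]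
  refine (sigmaAntidiagonalTupleEquivTuple m).summable_iff.symm.trans
    ((summable_sigma_of_nonneg fun _ => norm_nonneg _).trans ?_)
  rw [and_iff_right fun _ => Summable.of_finite]
  exact summable_congr hnorm

lemma tsum_smul_comp_sum [CompleteSpace E]
    (h : Summable (fun f : Fin m → ℕ => w f • c (∑ i, f i))) :
    ∑' f : Fin m → ℕ, w f • c (∑ i, f i) =
      ∑' n : ℕ, (∑ f ∈ antidiagonalTuple m n, w f) • c n := by
  have hsigma := (sigmaAntidiagonalTupleEquivTuple m).summable_iff.2 h
  rw [← (sigmaAntidiagonalTupleEquivTuple m).tsum_eq]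
  refine hsigma.tsum_sigma.trans (tsum_congr fun n => ?_)
  rw [← sum_antidiagonalTuple_smul]
  exact Finset.tsum_subtype _ fun f => w f • c (∑ i, f i)

end Grouping

section Summand

lemma cpow_sum_mul_sub {x : ℂ} (hx : x ≠ 0) (k : ℕ) (t : ℂ) (f : Fin (k + 1) → ℕ) :
    x ^ (∑ i, (f i : ℂ) * (t - (i : ℕ))) =
      x ^ (∑ i, f i * (i.rev : ℕ)) * x ^ (((∑ i, f i : ℕ) : ℂ) * (t - k)) := by
  have hrev (i : Fin (k + 1)) : ((i.rev : ℕ) : ℂ) = k - (i : ℕ) := by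
    rw [Fin.val_rev, Nat.add_sub_add_right, Nat.cast_sub i.is_le]
  rw [← cpow_natCast, ← cpow_add _ _ hx]
  congr 1
  push_cast
  rw [sum_mul, ← sum_add_distrib]
  exact sum_congr rfl fun i _ => by rw [hrev]; ring

variable {q : ℝ}

lemma norm_ofReal_cpow_lt_one (hq0 : 0 < q) (hq1 : q < 1) {w : ℂ} (hw : 0 < w.re) :
    ‖(q : ℂ) ^ w‖ < 1 := by
  rw [norm_cpow_eq_rpow_re_of_pos hq0]
  exact Real.rpow_lt_one hq0.le hq1 hw

lemma qNum_ne_zero (hq0 : 0 < q) (hq1 : q < 1) {w : ℂ} (hw : 0 < w.re) : qNum q w ≠ 0 := by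
  refine div_ne_zero (sub_ne_zero.2 fun h => ?_) (sub_ne_zero.2 (mod_cast hq1.ne'))
  simpa [← h] using norm_ofReal_cpow_lt_one hq0 hq1 hw

lemma tendsto_qNum_natCast_add (hq0 : q ≠ 0) (hq1 : |q| < 1) (z : ℂ) :
    Tendsto (fun n : ℕ => qNum q (n + z)) atTop (𝓝 (((1 - q)⁻¹ : ℝ) : ℂ)) := by
  have hpow : Tendsto (fun n : ℕ => (q : ℂ) ^ n) atTop (𝓝 0) :=
    tendsto_pow_atTop_nhds_zero_of_norm_lt_one (by simpa using hq1)
  have hlim := ((hpow.mul_const ((q : ℂ) ^ z)).const_sub 1).div_const (1 - (q : ℂ))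
  simp only [zero_mul, sub_zero, one_div] at hlim
  push_cast
  refine hlim.congr fun n => ?_
  rw [qNum, cpow_add _ _ (ofReal_ne_zero.2 hq0), cpow_natCast]

lemma isBigO_inv_qNum_cpow (hq0 : q ≠ 0) (hq1 : |q| < 1) (s z : ℂ) :
    (fun n : ℕ => (qNum q (n + z) ^ s)⁻¹) =O[atTop] fun _ => (1 : ℝ) := by
  have hpos : 0 < (1 - q)⁻¹ := inv_pos.2 (sub_pos.2 (abs_lt.1 hq1).2)
  have hlim_ne : (((1 - q)⁻¹ : ℝ) : ℂ) ^ s ≠ 0 :=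
    fun h => ofReal_ne_zero.2 hpos.ne' ((cpow_eq_zero_iff _ _).1 h).1
  exact (((tendsto_qNum_natCast_add hq0 hq1 z).cpow tendsto_const_nhds
    (ofReal_mem_slitPlane.2 hpos)).inv₀ hlim_ne).isBigO_one ℝ

lemma summable_norm_cpow_div_qNum_cpow (hq0 : 0 < q) (hq1 : q < 1) {a : ℂ} (ha : 0 < a.re)
    (s z : ℂ) :
    Summable (fun n : ℕ => ‖(q : ℂ) ^ ((n : ℂ) * a) / qNum q (n + z) ^ s‖) := by
  have hgeom : (fun n : ℕ => (q : ℂ) ^ ((n : ℂ) * a)) =O[atTop] fun n => ‖(q : ℂ) ^ a‖ ^ n :=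
    .of_norm_left (by simpa [cpow_nat_mul] using Asymptotics.isBigO_refl _ _)
  have hbound := isBigO_inv_qNum_cpow hq0.ne' ((abs_of_pos hq0).trans_lt hq1) s z
  refine summable_of_isBigO_nat (summable_geometric_of_lt_one (norm_nonneg _)
    (norm_ofReal_cpow_lt_one hq0 hq1 ha)) (Asymptotics.IsBigO.norm_left ?_)
  simpa only [div_eq_mul_inv, mul_one] using hgeom.mul hbound

end Summand

theorem zetaQ_eq_single_series_general (q : ℝ) (hq0 : 0 < q) (hq1 : q < 1) (r : ℕ) (hr : 1 ≤ r)
    (s t z : ℂ) (ht : (r : ℝ) - 1 < t.re) (_hz : ∀ n : ℕ, qNum q (n + z) ≠ 0) :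
    Summable (fun f : Fin r → ℕ =>
      ‖(q : ℂ) ^ (∑ i : Fin r, (f i : ℂ) * (t - (i : ℕ)))
        / (qNum q (((∑ i : Fin r, f i : ℕ) : ℂ) + z)) ^ s‖) ∧
    Summable (fun n : ℕ =>
      ‖(qBinom q (n + r - 1) (r - 1) : ℂ) * (q : ℂ) ^ ((n : ℂ) * (t - r + 1))
        / (qNum q ((n : ℂ) + z)) ^ s‖) ∧
    zetaQ q r s t z
      = ∑' n : ℕ, (qBinom q (n + r - 1) (r - 1) : ℂ) * (q : ℂ) ^ ((n : ℂ) * (t - r + 1))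
          / (qNum q ((n : ℂ) + z)) ^ s := by
  obtain ⟨k, rfl⟩ := Nat.exists_eq_add_of_le' hr
  have hq : |q| < 1 := by rwa [abs_of_pos hq0]
  let w (f : Fin (k + 1) → ℕ) : ℝ := q ^ (∑ i, f i * (i.rev : ℕ))
  let c (n : ℕ) : ℂ := (q : ℂ) ^ ((n : ℂ) * (t - k)) / qNum q (n + z) ^ s
  have hmultiple (f : Fin (k + 1) → ℕ) : (q : ℂ) ^ (∑ i, (f i : ℂ) * (t - (i : ℕ))) /
      qNum q ((∑ i, f i : ℕ) + z) ^ s = w f • c (∑ i, f i) := by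
    rw [cpow_sum_mul_sub (ofReal_ne_zero.2 hq0.ne'), mul_div_assoc, real_smul, ofReal_pow]
  have hsingle (n : ℕ) : (qBinom q (n + (k + 1) - 1) (k + 1 - 1) : ℂ) *
      (q : ℂ) ^ ((n : ℂ) * (t - (k + 1 : ℕ) + 1)) / qNum q (n + z) ^ s =
        qBinom q (n + k) k • c n := by
    rw [real_smul, mul_div_assoc, Nat.cast_add_one, sub_add, add_sub_cancel_right]
    rfl
  have hqBinom (n : ℕ) : ∑ f ∈ antidiagonalTuple (k + 1) n, w f = qBinom q (n + k) k :=
    sum_antidiagonalTuple_pow_sum_mul_rev hq.ne k n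
  have hsummable : Summable (fun n => ‖qBinom q (n + k) k • c n‖) :=
    summable_norm_qBinom_smul hq0.le hq1 k
      (summable_norm_cpow_div_qNum_cpow hq0 hq1 (by simpa using ht) s z)
  have hsummable' : Summable (fun f => ‖w f • c (∑ i, f i)‖) :=
    (summable_norm_smul_comp_sum_iff fun f => by positivity).2 (by simpa only [hqBinom])
  simp only [zetaQ, hmultiple, hsingle]
  exact ⟨hsummable', hsummable, by simpa only [hqBinom] using tsum_smul_comp_sum hsummable'.of_norm⟩

/-- For `0 < q < 1`, `r ≥ 1`, `Re t > r − 1`, `Re z > 0`, the multiple series defining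
`ζ_{q,r}(s,t,z)` converges absolutely and can be rearranged as the absolutely convergent
single series `∑_{n≥0} [n+r−1; r−1]_q q^{n(t−r+1)} / [n+z]_q^s`. -/
theorem zetaQ_eq_single_series (q : ℝ) (hq0 : 0 < q) (hq1 : q < 1) (r : ℕ) (hr : 1 ≤ r)
    (s t z : ℂ) (ht : (r : ℝ) - 1 < t.re) (hz : 0 < z.re) :
    Summable (fun f : Fin r → ℕ =>
      ‖(q : ℂ) ^ (∑ i : Fin r, (f i : ℂ) * (t - (i : ℕ)))
        / (qNum q (((∑ i : Fin r, f i : ℕ) : ℂ) + z)) ^ s‖) ∧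
    Summable (fun n : ℕ =>
      ‖(qBinom q (n + r - 1) (r - 1) : ℂ) * (q : ℂ) ^ ((n : ℂ) * (t - r + 1))
        / (qNum q ((n : ℂ) + z)) ^ s‖) ∧
    zetaQ q r s t z
      = ∑' n : ℕ, (qBinom q (n + r - 1) (r - 1) : ℂ) * (q : ℂ) ^ ((n : ℂ) * (t - r + 1))
          / (qNum q ((n : ℂ) + z)) ^ s := by
  exact zetaQ_eq_single_series_general q hq0 hq1 r hr s t z ht fun n =>
    qNum_ne_zero hq0 hq1 (by simpa using add_pos_of_nonneg_of_pos n.cast_nonneg hz)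
end

section
/- Let r ≥ 1 be an integer, let s ∈ ℂ with Re(s) > r, and let z ∈ ℂ with Re(z) > 0. Then ζ_r(s,z) = ∑_{l=0}^{r−1} P^l_r(z) · ∑_{n=0}^{∞} (n+z)^{l−s}, where each inner series converges absolutely because Re(s−l) > 1. -/
open Complex

/-- The Barnes multiple zeta function `ζ_r(s,z) = ∑_{n₁,…,n_r ≥ 0} (n₁+⋯+n_r+z)^{−s}`
(principal complex powers). -/
noncomputable def zetaBarnes (r : ℕ) (s z : ℂ) : ℂ :=
  ∑' f : Fin r → ℕ, (((∑ i : Fin r, f i : ℕ) : ℂ) + z) ^ (-s)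

/-- The polynomial coefficient `P^l_r(z)`: `(1/(r−1)!)` times the coefficient of `X^l`
in `∏_{j=1}^{r−1} (X − z + j) ∈ ℂ[X]`. -/
noncomputable def Pclassical (r l : ℕ) (z : ℂ) : ℂ :=
  (∏ j ∈ Finset.Icc 1 (r - 1),
      (Polynomial.X - Polynomial.C z + Polynomial.C ((j : ℕ) : ℂ))).coeff l
    / ((r - 1).factorial : ℂ)

/-!
Group the tuples `(n₁, …, n_r)` by their sum `n`: there are
`(n + r - 1).choose (r - 1) = (n + 1) ⋯ (n + r - 1) / (r - 1)!` of them. This is a polynomial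
in `n`, and `P^l_r(z)` are its coefficients when it is expanded in powers of `n + z`. Multiplying
by `(n + z) ^ (-s)` and summing over `n` gives the identity; regrouping the series is legitimate
because the degree in `n` is `r - 1 < Re s - 1`.
-/

open Asymptotics Filter Polynomial
open scoped Nat

section Fibers

variable {α β E : Type*} [NormedAddCommGroup E] [CompleteSpace E]

lemma summable_comp_of_summable_ncard_fiber_smul (π : α → β) [∀ b, Finite (π ⁻¹' {b})] {g : β → E}
    (hg : Summable fun b ↦ (π ⁻¹' {b}).ncard • ‖g b‖) : Summable fun a ↦ g (π a) := by
  have norm_eq (b : β) (a : π ⁻¹' {b}) : ‖g (π a)‖ = ‖g b‖ := by rw [a.2]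
  refine .of_norm <| (summable_partition (fun _ ↦ norm_nonneg _) (s := fun b ↦ π ⁻¹' {b})
    fun a ↦ ⟨π a, rfl, fun _ h ↦ h.symm⟩).2 ⟨fun _ ↦ .of_finite, ?_⟩
  simpa only [norm_eq, tsum_const, Nat.card_coe_set_eq] using hg

lemma tsum_comp_eq_tsum_ncard_fiber_smul (π : α → β) [∀ b, Finite (π ⁻¹' {b})] {g : β → E}
    (hg : Summable fun b ↦ (π ⁻¹' {b}).ncard • ‖g b‖) :
    ∑' a, g (π a) = ∑' b, (π ⁻¹' {b}).ncard • g b := by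
  have comp_eq (b : β) (a : π ⁻¹' {b}) : g (π a) = g b := by rw [a.2]
  rw [← ((summable_comp_of_summable_ncard_fiber_smul π hg).hasSum.tsum_fiberwise π).tsum_eq]
  simp only [comp_eq, tsum_const, Nat.card_coe_set_eq]

end Fibers

section StarsAndBars

variable (ι : Type*) [Fintype ι] (n : ℕ)

instance finite_fiber_sum : Finite ((fun f : ι → ℕ ↦ ∑ i, f i) ⁻¹' {n}) :=
  let := Classical.decEq ι
  .of_equiv _ (Sym.equivNatSumOfFintype ι n)

lemma ncard_fiber_sum_eq_multichoose :
    ((fun f : ι → ℕ ↦ ∑ i, f i) ⁻¹' {n}).ncard = (Fintype.card ι).multichoose n := by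
  classical
  rw [← Nat.card_coe_set_eq, ← Nat.card_eq_fintype_card, ← Sym.natCard_sym_eq_multichoose]
  exact (Nat.card_congr (Sym.equivNatSumOfFintype ι n)).symm

end StarsAndBars

lemma ascPochhammer_comp_add_one_eq_prod_Icc {R : Type*} [CommSemiring R] (m : ℕ) (p : R[X]) :
    (ascPochhammer R m).comp (p + 1) = ∏ j ∈ Finset.Icc 1 m, (p + C (j : R)) := by
  induction m with
  | zero => simp
  | succ m ih =>
    rw [Finset.prod_Icc_succ_top (by lia), ← ih, ascPochhammer_succ_right]
    simp [add_assoc, add_comm (1 : R[X])]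

lemma Pclassical_succ_eq_coeff_comp (m l : ℕ) (z : ℂ) :
    Pclassical (m + 1) l z = ((ascPochhammer ℂ m).comp (X - C z + 1)).coeff l / m ! := by
  rw [Pclassical, ascPochhammer_comp_add_one_eq_prod_Icc, Nat.add_sub_cancel]

lemma sum_Pclassical_mul_pow (m : ℕ) (z w : ℂ) :
    ∑ l ∈ Finset.range (m + 1), Pclassical (m + 1) l z * w ^ l
      = (ascPochhammer ℂ m).eval (w - z + 1) / m ! := by
  have natDegree_lt : ((ascPochhammer ℂ m).comp (X - C z + 1)).natDegree < m + 1 := by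
    have : (X - C z + 1 : ℂ[X]).natDegree ≤ 1 := by compute_degree
    simpa [natDegree_comp, Nat.lt_succ_iff] using Nat.mul_le_mul_left m this
  simp only [Pclassical_succ_eq_coeff_comp, div_mul_eq_mul_div]
  rw [← Finset.sum_div, ← eval_eq_sum_range' natDegree_lt]
  simp

lemma multichoose_eq_sum_Pclassical (m n : ℕ) (z : ℂ) :
    ((m + 1).multichoose n : ℂ)
      = ∑ l ∈ Finset.range (m + 1), Pclassical (m + 1) l z * ((n : ℂ) + z) ^ l := by
  have choose_eq : (m + 1).multichoose n = (n + m).choose m := by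
    rw [Nat.multichoose_eq, add_right_comm, Nat.add_sub_cancel, add_comm m, Nat.choose_symm_add]
  rw [sum_Pclassical_mul_pow, add_sub_cancel_right, ← Nat.cast_succ,
    ascPochhammer_nat_eq_natCast_ascFactorial, Nat.ascFactorial_eq_factorial_mul_choose,
    Nat.cast_mul, mul_div_cancel_left₀ _ (mod_cast m.factorial_ne_zero), choose_eq]

lemma multichoose_mul_cpow_eq_sum (m n : ℕ) (s : ℂ) {z : ℂ} (hz : z ≠ -n) :
    ((m + 1).multichoose n : ℂ) * ((n : ℂ) + z) ^ (-s)
      = ∑ l ∈ Finset.range (m + 1), Pclassical (m + 1) l z * ((n : ℂ) + z) ^ ((l : ℂ) - s) := by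
  have hne : (n : ℂ) + z ≠ 0 := fun h ↦ hz (eq_neg_of_add_eq_zero_right h)
  simp only [multichoose_eq_sum_Pclassical m n z, Finset.sum_mul, sub_eq_add_neg,
    cpow_add _ _ hne, cpow_natCast, mul_assoc]

lemma natCast_add_isTheta {𝕜 : Type*} [RCLike 𝕜] (z : 𝕜) :
    (fun n : ℕ ↦ (n : 𝕜) + z) =Θ[atTop] fun n ↦ (n : ℝ) := by
  have cast_isTheta : (fun n : ℕ ↦ (n : 𝕜)) =Θ[atTop] fun n ↦ (n : ℝ) :=
    .of_norm_eventuallyEq <| .of_forall fun n ↦ by simp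
  refine cast_isTheta.add_isLittleO <| isLittleO_const_left.2 <| .inr ?_
  simpa [Function.comp_def] using tendsto_natCast_atTop_atTop (R := ℝ)

lemma summable_norm_natCast_add_cpow (z : ℂ) {a : ℂ} (ha : a.re < -1) :
    Summable fun n : ℕ ↦ ‖((n : ℂ) + z) ^ a‖ := by
  have isBigO : (fun n : ℕ ↦ ((n : ℂ) + z) ^ a) =O[atTop] fun n ↦ (n : ℝ) ^ a.re :=
    (isBigO_cpow_rpow isBoundedUnder_const).trans_isTheta <|
      (natCast_add_isTheta z).norm_left.rpow (.of_forall fun _ ↦ norm_nonneg _)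
        (.of_forall fun n ↦ n.cast_nonneg)
  exact summable_of_isBigO_nat (Real.summable_nat_rpow.2 ha) isBigO.norm_left

theorem zetaBarnes_eq_tsum_multichoose {r : ℕ} {s z : ℂ}
    (h : Summable fun n : ℕ ↦ ‖(r.multichoose n : ℂ) * ((n : ℂ) + z) ^ (-s)‖) :
    zetaBarnes r s z = ∑' n : ℕ, (r.multichoose n : ℂ) * ((n : ℂ) + z) ^ (-s) := by
  simpa [zetaBarnes, ncard_fiber_sum_eq_multichoose] using tsum_comp_eq_tsum_ncard_fiber_smul
    (fun f : Fin r → ℕ ↦ ∑ i, f i) (g := fun n ↦ ((n : ℂ) + z) ^ (-s))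
    (by simpa [ncard_fiber_sum_eq_multichoose] using h)

theorem zetaBarnes_eq_sum_Pclassical_general (r : ℕ) (hr : 1 ≤ r) (s z : ℂ)
    (hs : (r : ℝ) < s.re) (hz : ∀ n : ℕ, z ≠ -n) :
    (∀ l < r, Summable (fun n : ℕ => ‖((n : ℂ) + z) ^ ((l : ℂ) - s)‖)) ∧
    zetaBarnes r s z
      = ∑ l ∈ Finset.range r, Pclassical r l z * ∑' n : ℕ, ((n : ℂ) + z) ^ ((l : ℂ) - s) := by
  have summable_inner : ∀ l < r, Summable fun n : ℕ ↦ ‖((n : ℂ) + z) ^ ((l : ℂ) - s)‖ := by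
    intro l hl
    have : (l : ℝ) + 1 ≤ r := mod_cast hl
    exact summable_norm_natCast_add_cpow z (by simp only [sub_re, natCast_re]; linarith)
  refine ⟨summable_inner, ?_⟩
  obtain ⟨m, rfl⟩ := Nat.exists_eq_add_of_le' hr
  have summable_term : ∀ l ∈ Finset.range (m + 1), Summable fun n : ℕ ↦
      Pclassical (m + 1) l z * ((n : ℂ) + z) ^ ((l : ℂ) - s) :=
    fun l hl ↦ (summable_inner l (Finset.mem_range.1 hl)).of_norm.mul_left _
  have expand (n : ℕ) := multichoose_mul_cpow_eq_sum m n s (hz n)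
  calc zetaBarnes (m + 1) s z
    _ = ∑' n : ℕ, ((m + 1).multichoose n : ℂ) * ((n : ℂ) + z) ^ (-s) :=
      zetaBarnes_eq_tsum_multichoose <| by
        simpa only [expand] using (summable_sum summable_term).norm
    _ = ∑ l ∈ Finset.range (m + 1), ∑' n : ℕ,
          Pclassical (m + 1) l z * ((n : ℂ) + z) ^ ((l : ℂ) - s) := by
      simp only [expand, Summable.tsum_finsetSum summable_term]
    _ = _ := by simp only [tsum_mul_left]

/-- For `r ≥ 1`, `Re s > r`, `Re z > 0`:
`ζ_r(s,z) = ∑_{l=0}^{r−1} P^l_r(z) ∑_{n≥0} (n+z)^{l−s}`, each inner series being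
absolutely convergent (since `Re(s−l) > 1`). -/
theorem zetaBarnes_eq_sum_Pclassical (r : ℕ) (hr : 1 ≤ r) (s z : ℂ)
    (hs : (r : ℝ) < s.re) (hz : 0 < z.re) :
    (∀ l < r, Summable (fun n : ℕ => ‖((n : ℂ) + z) ^ ((l : ℂ) - s)‖)) ∧
    zetaBarnes r s z
      = ∑ l ∈ Finset.range r, Pclassical r l z * ∑' n : ℕ, ((n : ℂ) + z) ^ ((l : ℂ) - s) := by
  refine zetaBarnes_eq_sum_Pclassical_general r hr s z hs ?_
  rintro n rfl
  exact absurd hz (by simp)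
end

section
/- Let r ≥ 1 be an integer, let z ∈ ℂ, and let 0 ≤ l ≤ r − 1. Then lim_{q → 1⁻} P^l_{q,r}(z) = P^l_r(z), the limit being taken over real q increasing to 1. -/
/-!
`[w]_q` is the difference quotient of `x ↦ x ^ w` between `q` and `1`, so it tends to the
derivative `w` as `q → 1`. Consequently `[n]_q!` tends to `n!` and the sum in `P^l_{q,r}(z)` tends
to the elementary symmetric polynomial in the `z - m`, which is, up to sign, the coefficient of
`X ^ l` in `∏ (X - (z - m))` by Vieta's formula.
-/

open Complex

/-- The q-factorial `[n]_q! = ∏_{k=1}^n [k]_q`. -/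
noncomputable def qFact (q : ℝ) (n : ℕ) : ℝ := ∏ k ∈ Finset.Icc 1 n, (1 - q ^ k) / (1 - q)

/-- The coefficient `P^l_{q,r}(z)`: for `0 ≤ l ≤ r−1`,
`P^l_{q,r}(z) = ((−1)^{r−1−l}/[r−1]_q!) ∑_{1 ≤ m₁ < ⋯ < m_{r−1−l} ≤ r−1}
q^{m₁+⋯+m_{r−1−l}} [z−m₁]_q ⋯ [z−m_{r−1−l}]_q`
(so that `P^{r−1}_{q,r}(z) = 1/[r−1]_q!`, the sum over the empty set being `1`). -/
noncomputable def Pq (q : ℝ) (r l : ℕ) (z : ℂ) : ℂ :=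
  ((-1 : ℂ) ^ (r - 1 - l) / (qFact q (r - 1) : ℂ)) *
    ∑ A ∈ Finset.powersetCard (r - 1 - l) (Finset.Icc 1 (r - 1)),
      (q : ℂ) ^ (∑ m ∈ A, m) * ∏ m ∈ A, qNum q (z - (m : ℕ))

section Vieta

open Polynomial

lemma coeff_prod_X_sub_C {R ι : Type*} [CommRing R] (s : Finset ι) (f : ι → R) {k : ℕ}
    (hk : k ≤ s.card) :
    (∏ i ∈ s, (X - C (f i))).coeff k =
      (-1) ^ (s.card - k) * ∑ t ∈ s.powersetCard (s.card - k), ∏ i ∈ t, f i := by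
  have hvieta := Multiset.prod_X_sub_C_coeff (s.val.map f) (k := k) (by simpa using hk)
  rwa [Multiset.map_map, Multiset.card_map, Finset.esymm_map_val] at hvieta

lemma Pclassical_add_one_eq {n l : ℕ} (hl : l ≤ n) (z : ℂ) :
    Pclassical (n + 1) l z = (-1) ^ (n - l) / (n.factorial : ℂ) *
      ∑ A ∈ (Finset.Icc 1 n).powersetCard (n - l), ∏ m ∈ A, (z - (m : ℂ)) := by
  have hfactor (j : ℕ) : (X - C z + C (j : ℂ) : ℂ[X]) = X - C (z - j) := by
    rw [C_sub, sub_add]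
  have hcoeff := coeff_prod_X_sub_C (Finset.Icc 1 n) (fun m : ℕ => z - (m : ℂ)) (k := l)
    (by simpa using hl)
  rw [Nat.card_Icc, Nat.add_sub_cancel] at hcoeff
  simp only [Pclassical, Nat.add_sub_cancel, hfactor]
  rw [hcoeff, mul_div_right_comm]

end Vieta

section Limits

open Filter Topology

lemma tendsto_qNum (w : ℂ) : Tendsto (fun q : ℝ => qNum q w) (𝓝[≠] 1) (𝓝 w) := by
  have hderiv : HasDerivAt (fun q : ℝ => (q : ℂ) ^ w) w 1 := by
    simpa using ((hasDerivAt_id ((1 : ℝ) : ℂ)).cpow_const (c := w) (by simp)).comp_ofReal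
  refine hderiv.tendsto_slope.congr fun q => ?_
  rw [slope_def_module, Complex.real_smul, qNum, ← neg_div_neg_eq]
  simp [div_eq_inv_mul]

lemma ofReal_qFact (q : ℝ) (n : ℕ) :
    (qFact q n : ℂ) = ∏ k ∈ Finset.Icc 1 n, qNum q (k : ℂ) := by
  simp [qFact, qNum]

lemma tendsto_qFact (n : ℕ) :
    Tendsto (fun q : ℝ => (qFact q n : ℂ)) (𝓝[≠] 1) (𝓝 (n.factorial : ℂ)) := by
  have hfactorial : (n.factorial : ℂ) = ∏ k ∈ Finset.Icc 1 n, (k : ℂ) := by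
    rw [← Finset.prod_Ico_id_eq_factorial, Finset.Ico_add_one_right_eq_Icc, Nat.cast_prod]
  simp only [ofReal_qFact, hfactorial]
  exact tendsto_finsetProd _ fun k _ => tendsto_qNum k

lemma tendsto_pow_mul_prod_qNum {ι : Type*} (A : Finset ι) (w : ι → ℂ) (e : ℕ) :
    Tendsto (fun q : ℝ => (q : ℂ) ^ e * ∏ i ∈ A, qNum q (w i)) (𝓝[≠] 1)
      (𝓝 (∏ i ∈ A, w i)) := by
  have hpow : Tendsto (fun q : ℝ => (q : ℂ) ^ e) (𝓝[≠] 1) (𝓝 1) :=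
    ((Complex.continuous_ofReal.pow e).tendsto' 1 1 (by simp)).mono_left nhdsWithin_le_nhds
  simpa only [one_mul] using hpow.mul (tendsto_finsetProd A fun i _ => tendsto_qNum (w i))

theorem tendsto_Pq_Pclassical_general {n l : ℕ} (hl : l ≤ n) (z : ℂ) :
    Tendsto (fun q : ℝ => Pq q (n + 1) l z) (𝓝[≠] 1) (𝓝 (Pclassical (n + 1) l z)) := by
  rw [Pclassical_add_one_eq hl]
  have hfactorial : (n.factorial : ℂ) ≠ 0 := Nat.cast_ne_zero.mpr n.factorial_ne_zero
  exact (tendsto_const_nhds.div (tendsto_qFact n) hfactorial).mul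
    (tendsto_finsetSum _ fun A _ => tendsto_pow_mul_prod_qNum A (fun m => z - (m : ℂ)) (∑ m ∈ A, m))

end Limits

/-- For `r ≥ 1`, `z ∈ ℂ`, `0 ≤ l ≤ r − 1`: `lim_{q↑1} P^l_{q,r}(z) = P^l_r(z)`,
the limit being over real `q` increasing to `1` (within `(0,1)`). -/
theorem tendsto_Pq_Pclassical (r : ℕ) (hr : 1 ≤ r) (z : ℂ) (l : ℕ) (hl : l ≤ r - 1) :
    Filter.Tendsto (fun q : ℝ => Pq q r l z)
      (nhdsWithin 1 (Set.Ioo 0 1)) (nhds (Pclassical r l z)) := by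
  obtain ⟨n, rfl⟩ := Nat.exists_eq_add_of_le' hr
  exact (tendsto_Pq_Pclassical_general hl z).mono_left
    (nhdsWithin_mono 1 fun _ hq => hq.2.ne)
end

section
/- Let z ∈ ℂ with Re(z) > 0, let s ∈ ℂ with Re(s) > 1, and let M ≥ 0 be an integer. Then ∑_{n=0}^{∞} (n+z)^{−s} = z^{1−s}/(s−1) + z^{−s}/2 + ∑_{k=1}^{M} (B_{k+1}/(k+1)!) · (s)_k · z^{−s−k} − ((s)_{M+1}/(M+1)!) · ∫_0^∞ B̃_{M+1}(x) · (x+z)^{−s−M−1} dx, where the integral converges absolutely. -/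
/-!
For `f` differentiable on `[0, ∞)`, integration by parts on `[n, n + 1]` against the antiderivative
`B̃_{k+1} - B_{k+1}(1)` of `(k + 1) B̃_k`, which vanishes at the right endpoint, gives
`(k + 1) ∫ B̃_k f + ∫ (B̃_{k+1} - B_{k+1}(1)) f' = (B_{k+1}(1) - B_{k+1}(0)) f(n)`.
If `f` and `f'` are integrable, the integrals on the left may be summed over `n`, and no limit of
boundary terms is needed. The coefficient on the right is `1` for `k = 0`, which evaluates
`∑ f(n)`, and `0` for `k ≥ 1`, which trades `∫ B̃_k f` for `∫ B̃_{k+1} f'`. Iterating gives the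
Euler–Maclaurin formula, to be applied to `f(x) = (x + z)^{-s}`.
-/

open Complex

/-- The periodic Bernoulli function `B̃_k(x) = B_k(x − ⌊x⌋)`, where `B_k` is the `k`-th
Bernoulli polynomial. -/
noncomputable def periodicBernoulli (k : ℕ) (x : ℝ) : ℝ :=
  ((Polynomial.bernoulli k).map (algebraMap ℚ ℝ)).eval (Int.fract x)

open MeasureTheory Filter Topology Set Asymptotics
open scoped Nat Interval

section PeriodicBernoulli

lemma periodicBernoulli_eq_bernoulliFun_fract (k : ℕ) (x : ℝ) :
    periodicBernoulli k x = bernoulliFun k (Int.fract x) := rfl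

lemma periodicBernoulli_zero (x : ℝ) : periodicBernoulli 0 x = 1 :=
  bernoulliFun_zero _

lemma periodicBernoulli_eq_bernoulliFun_sub {n : ℤ} {x : ℝ} (hx : x ∈ Ico (n : ℝ) (n + 1))
    (k : ℕ) : periodicBernoulli k x = bernoulliFun k (x - n) := by
  rw [periodicBernoulli_eq_bernoulliFun_fract, Int.fract, Int.floor_eq_on_Ico n x hx]

lemma measurable_periodicBernoulli (k : ℕ) : Measurable (periodicBernoulli k) :=
  (continuous_bernoulliFun k).measurable.comp measurable_fract

lemma exists_norm_periodicBernoulli_le (k : ℕ) : ∃ C, ∀ x, ‖periodicBernoulli k x‖ ≤ C := by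
  obtain ⟨C, hC⟩ := isCompact_Icc.exists_bound_of_continuousOn (s := Icc (0 : ℝ) 1)
    (continuous_bernoulliFun k).continuousOn
  exact ⟨C, fun x => hC _ ⟨Int.fract_nonneg x, (Int.fract_lt_one x).le⟩⟩

end PeriodicBernoulli

section EulerMaclaurin

variable {E : Type*} [NormedAddCommGroup E] [NormedSpace ℝ E]

lemma integrable_periodicBernoulli_smul {μ : Measure ℝ} {f : ℝ → E} (hf : Integrable f μ) (k : ℕ) :
    Integrable (fun x => periodicBernoulli k x • f x) μ := by
  obtain ⟨C, hC⟩ := exists_norm_periodicBernoulli_le k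
  exact hf.bdd_smul C (measurable_periodicBernoulli k).aestronglyMeasurable (ae_of_all _ hC)

lemma hasSum_intervalIntegral_of_monotone {f : ℝ → E} {a : ℕ → ℝ} (ha : Monotone a)
    (ha' : ¬BddAbove (range a)) (hf : IntegrableOn f (Ioi (a 0))) :
    HasSum (fun n => ∫ x in a n..a (n + 1), f x) (∫ x in Ioi (a 0), f x) := by
  have hUnion : ⋃ n, Ioc (a n) (a (n + 1)) = Ioi (a 0) :=
    iUnion_Ioc_map_succ_eq_Ioi (fun n => ha n.zero_le) ha'
  simp only [intervalIntegral.integral_of_le (ha (Nat.le_succ _)), ← hUnion] at hf ⊢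
  exact hasSum_integral_iUnion (fun _ => measurableSet_Ioc) ha.pairwise_disjoint_on_Ioc_succ hf

lemma hasSum_intervalIntegral_nat {f : ℝ → E} (hf : IntegrableOn f (Ioi 0)) :
    HasSum (fun n : ℕ => ∫ x in (n : ℝ)..n + 1, f x) (∫ x in Ioi 0, f x) := by
  have h := hasSum_intervalIntegral_of_monotone (Nat.mono_cast (α := ℝ))
    (not_bddAbove_of_tendsto_atTop tendsto_natCast_atTop_atTop) (by simpa using hf)
  simpa using h

variable [CompleteSpace E] {f f' : ℝ → E}

lemma intervalIntegral_periodicBernoulli_smul {n : ℤ} (k : ℕ)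
    (hderiv : ∀ x ∈ [[(n : ℝ), n + 1]], HasDerivWithinAt f (f' x) [[(n : ℝ), n + 1]] x)
    (hf' : IntervalIntegrable f' volume n (n + 1)) :
    (k + 1 : ℝ) • (∫ x in (n : ℝ)..n + 1, periodicBernoulli k x • f x)
      = bernoulliFun (k + 1) 1 • f (n + 1) - bernoulliFun (k + 1) 0 • f n
        - ∫ x in (n : ℝ)..n + 1, periodicBernoulli (k + 1) x • f' x := by
  have hper (j : ℕ) (g : ℝ → E) : ∫ x in (n : ℝ)..n + 1, periodicBernoulli j x • g x
      = ∫ x in (n : ℝ)..n + 1, bernoulliFun j (x - n) • g x :=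
    intervalIntegral.integral_congr_Ioo_of_le (by linarith) fun x hx => by
      simp only [periodicBernoulli_eq_bernoulliFun_sub (Ioo_subset_Ico_self hx)]
  have hu (x : ℝ) : HasDerivAt (fun y => bernoulliFun (k + 1) (y - n))
      ((k + 1 : ℝ) * bernoulliFun k (x - n)) x := by
    simpa using (hasDerivAt_bernoulliFun (k + 1) (x - n)).comp_sub_const x (n : ℝ)
  have hu' : Continuous fun x : ℝ => (k + 1 : ℝ) * bernoulliFun k (x - n) :=
    continuous_const.mul ((continuous_bernoulliFun k).comp (continuous_sub_right (n : ℝ)))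
  have hparts := intervalIntegral.integral_smul_deriv_eq_deriv_smul_of_hasDerivWithinAt
    (fun x _ => (hu x).hasDerivWithinAt) hderiv (hu'.intervalIntegrable _ _) hf'
  simp only [add_sub_cancel_left, sub_self, mul_smul, intervalIntegral.integral_smul] at hparts
  rw [hper, hper, hparts, sub_sub_cancel]

lemma integral_Ioi_eq_neg_of_hasDerivWithinAt {a : ℝ}
    (hderiv : ∀ x ∈ Ici a, HasDerivWithinAt f (f' x) (Ici a) x)
    (hf : IntegrableOn f (Ioi a)) (hf' : IntegrableOn f' (Ioi a)) :
    ∫ x in Ioi a, f' x = -f a := by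
  have hderiv' : ∀ x ∈ Ioi a, HasDerivAt f (f' x) x := fun x hx =>
    (hderiv x (Ioi_subset_Ici_self hx)).hasDerivAt (Ici_mem_nhds hx)
  rw [integral_Ioi_of_hasDerivAt_of_tendsto (hderiv a self_mem_Ici).continuousWithinAt hderiv' hf'
    (tendsto_zero_of_hasDerivAt_of_integrableOn_Ioi hderiv' hf' hf), zero_sub]

lemma hasSum_bernoulliFun_one_sub_zero_smul
    (hderiv : ∀ x ∈ Ici 0, HasDerivWithinAt f (f' x) (Ici 0) x)
    (hf : IntegrableOn f (Ioi 0)) (hf' : IntegrableOn f' (Ioi 0)) (k : ℕ) :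
    HasSum (fun n : ℕ => (bernoulliFun (k + 1) 1 - bernoulliFun (k + 1) 0) • f n)
      ((k + 1 : ℝ) • (∫ x in Ioi 0, periodicBernoulli k x • f x)
        + (∫ x in Ioi 0, periodicBernoulli (k + 1) x • f' x)
        + bernoulliFun (k + 1) 1 • f 0) := by
  have hsum_f := hasSum_intervalIntegral_nat (integrable_periodicBernoulli_smul hf k)
  have hsum_f' := hasSum_intervalIntegral_nat (integrable_periodicBernoulli_smul hf' (k + 1))
  have hsum := ((hsum_f.const_smul (k + 1 : ℝ)).add hsum_f').sub
    ((hasSum_intervalIntegral_nat hf').const_smul (bernoulliFun (k + 1) 1))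
  rw [integral_Ioi_eq_neg_of_hasDerivWithinAt hderiv hf hf', smul_neg, sub_neg_eq_add] at hsum
  refine hsum.congr_fun fun n => ?_
  have hsub : [[(n : ℝ), n + 1]] ⊆ Ici 0 := by
    rw [uIcc_of_le (by linarith)]
    exact Icc_subset_Ici_self.trans (Ici_subset_Ici.2 n.cast_nonneg)
  have hderiv_n : ∀ x ∈ [[(n : ℝ), n + 1]], HasDerivWithinAt f (f' x) [[(n : ℝ), n + 1]] x :=
    fun x hx => (hderiv x (hsub hx)).mono hsub
  have hf'_n : IntervalIntegrable f' volume n (n + 1) :=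
    (((integrableOn_Ici_iff_integrableOn_Ioi).2 hf').mono_set hsub).intervalIntegrable
  have hunit := intervalIntegral_periodicBernoulli_smul (n := n) k (by simpa using hderiv_n)
    (by simpa using hf'_n)
  have hftc : ∫ x in (n : ℝ)..n + 1, f' x = f (n + 1) - f n :=
    intervalIntegral.integral_eq_sub_of_hasDeriv_right
      (fun x hx => (hderiv_n x hx).continuousWithinAt)
      (fun x hx => have hx₀ := hsub (mem_Icc_of_Ioo hx)
        (hderiv x hx₀).mono (Ioi_subset_Ici hx₀)) hf'_n
  rw [Int.cast_natCast] at hunit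
  rw [hunit, hftc]
  module

theorem hasSum_nat_eq_integral_add
    (hderiv : ∀ x ∈ Ici 0, HasDerivWithinAt f (f' x) (Ici 0) x)
    (hf : IntegrableOn f (Ioi 0)) (hf' : IntegrableOn f' (Ioi 0)) :
    HasSum (fun n : ℕ => f n) ((∫ x in Ioi 0, f x) + (1 / 2 : ℝ) • f 0
      + ∫ x in Ioi 0, periodicBernoulli 1 x • f' x) := by
  have h := hasSum_bernoulliFun_one_sub_zero_smul hderiv hf hf' 0
  rw [add_right_comm]
  simpa only [Nat.cast_zero, zero_add, periodicBernoulli_zero, one_smul, bernoulliFun_one,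
    sub_self_div_two, zero_sub, sub_neg_eq_add, add_halves] using h

theorem integral_Ioi_periodicBernoulli_smul
    (hderiv : ∀ x ∈ Ici 0, HasDerivWithinAt f (f' x) (Ici 0) x)
    (hf : IntegrableOn f (Ioi 0)) (hf' : IntegrableOn f' (Ioi 0)) {k : ℕ} (hk : k ≠ 0) :
    (k + 1 : ℝ) • (∫ x in Ioi 0, periodicBernoulli k x • f x)
      = -((bernoulli (k + 1) : ℝ) • f 0
        + ∫ x in Ioi 0, periodicBernoulli (k + 1) x • f' x) := by
  have h := hasSum_bernoulliFun_one_sub_zero_smul hderiv hf hf' k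
  rw [bernoulliFun_endpoints_eq_of_ne_one (by omega), bernoulliFun_eval_zero] at h
  simp only [sub_self, zero_smul] at h
  rw [eq_neg_iff_add_eq_zero, ← h.unique hasSum_zero]
  abel

theorem hasSum_nat_eulerMaclaurin {f : ℕ → ℝ → E} (M : ℕ)
    (hderiv : ∀ k ≤ M, ∀ x ∈ Ici 0, HasDerivWithinAt (f k) (f (k + 1) x) (Ici 0) x)
    (hf : ∀ k ≤ M + 1, IntegrableOn (f k) (Ioi 0)) :
    HasSum (fun n : ℕ => f 0 n)
      ((∫ x in Ioi 0, f 0 x) + (1 / 2 : ℝ) • f 0 0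
        + (∑ k ∈ Finset.Icc 1 M, ((-1) ^ k * bernoulli (k + 1) / (k + 1)! : ℝ) • f k 0)
        + ((-1) ^ M / (M + 1)! : ℝ) • ∫ x in Ioi 0, periodicBernoulli (M + 1) x • f (M + 1) x) := by
  induction M with
  | zero =>
    simpa using hasSum_nat_eq_integral_add (hderiv 0 le_rfl) (hf 0 zero_le_one) (hf 1 le_rfl)
  | succ M ih =>
    convert ih (fun k hk => hderiv k (by omega)) (fun k hk => hf k (by omega)) using 1
    have hstep := integral_Ioi_periodicBernoulli_smul (hderiv (M + 1) le_rfl)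
      (hf (M + 1) (by omega)) (hf (M + 2) le_rfl) M.succ_ne_zero
    have hfact : ((-1) ^ M / (M + 1)! : ℝ) = (-1) ^ M / (M + 2)! * ((M + 1 : ℕ) + 1) := by
      rw [Nat.factorial_succ (M + 1)]
      push_cast
      field_simp
    rw [hfact, mul_smul, hstep, Finset.sum_Icc_succ_top (by omega), pow_succ]
    module

end EulerMaclaurin

section ComplexPower

variable {z : ℂ}

lemma ofReal_add_mem_slitPlane (hz : z ∈ slitPlane) {x : ℝ} (hx : 0 ≤ x) :
    (x : ℂ) + z ∈ slitPlane := by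
  rw [mem_slitPlane_iff, add_re, add_im, ofReal_re, ofReal_im, zero_add] at *
  exact hz.imp_left fun h => by linarith

lemma hasDerivAt_ofReal_add_cpow (hz : z ∈ slitPlane) (c : ℂ) {x : ℝ} (hx : 0 ≤ x) :
    HasDerivAt (fun y : ℝ => ((y : ℂ) + z) ^ c) (c * ((x : ℂ) + z) ^ (c - 1)) x := by
  simpa using (((hasDerivAt_id (x : ℂ)).add_const z).cpow_const (c := c)
    (ofReal_add_mem_slitPlane hz hx)).comp_ofReal

lemma isTheta_ofReal_add_cpow (z c : ℂ) :
    (fun x : ℝ => ((x : ℂ) + z) ^ c) =Θ[atTop] fun x : ℝ => x ^ c.re := by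
  have hequiv : (fun x : ℝ => (x : ℂ) + z) ~[atTop] fun x : ℝ => (x : ℂ) :=
    IsEquivalent.refl.add_const_of_norm_tendsto_atTop (by
      simpa [Function.comp_def] using tendsto_abs_atTop_atTop)
  have hnorm : (fun x : ℝ => ‖(x : ℂ) + z‖ ^ c.re) =Θ[atTop] fun x : ℝ => ‖(x : ℂ)‖ ^ c.re :=
    hequiv.isTheta.norm_left.norm_right.rpow (.of_forall fun _ => norm_nonneg _)
      (.of_forall fun _ => norm_nonneg _)
  have hne : ∀ᶠ x : ℝ in atTop, (x : ℂ) + z ≠ 0 := by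
    filter_upwards [eventually_gt_atTop (-z.re)] with x hx h
    exact hx.ne' (by simpa using congrArg re (eq_neg_of_add_eq_zero_left h))
  refine ((isTheta_cpow_const_rpow fun _ _ => hne).trans hnorm).trans_eventuallyEq ?_
  filter_upwards [eventually_ge_atTop 0] with x hx
  rw [norm_real, Real.norm_of_nonneg hx]

lemma integrableOn_Ioi_ofReal_add_cpow (hz : z ∈ slitPlane) {c : ℂ} (hc : c.re < -1) :
    IntegrableOn (fun x : ℝ => ((x : ℂ) + z) ^ c) (Ioi 0) := by
  have hcont : ContinuousOn (fun x : ℝ => ((x : ℂ) + z) ^ c) (Ici 0) := fun x hx =>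
    (hasDerivAt_ofReal_add_cpow hz c hx).continuousAt.continuousWithinAt
  exact ((hcont.locallyIntegrableOn measurableSet_Ici).integrableOn_of_isBigO_atTop
    (isTheta_ofReal_add_cpow z c).isBigO (integrableAtFilter_rpow_atTop_iff.2 hc)).mono_set
    Ioi_subset_Ici_self

lemma tendsto_ofReal_add_cpow_atTop (z : ℂ) {c : ℂ} (hc : c.re < 0) :
    Tendsto (fun x : ℝ => ((x : ℂ) + z) ^ c) atTop (𝓝 0) := by
  refine (isTheta_ofReal_add_cpow z c).isBigO.trans_tendsto ?_
  simpa using tendsto_rpow_neg_atTop (neg_pos.2 hc)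

lemma integral_Ioi_ofReal_add_cpow_neg (hz : z ∈ slitPlane) {s : ℂ} (hs : 1 < s.re) :
    ∫ x in Ioi (0 : ℝ), ((x : ℂ) + z) ^ (-s) = z ^ (1 - s) / (s - 1) := by
  have hne : 1 - s ≠ 0 := sub_ne_zero.2 fun h => hs.ne (by rw [← h, one_re])
  have hderiv : ∀ x ∈ Ici (0 : ℝ), HasDerivAt (fun y : ℝ => ((y : ℂ) + z) ^ (1 - s) / (1 - s))
      (((x : ℂ) + z) ^ (-s)) x := fun x hx => by
    simpa [hne] using (hasDerivAt_ofReal_add_cpow hz (1 - s) hx).div_const (1 - s)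
  rw [integral_Ioi_of_hasDerivAt_of_tendsto' hderiv
    (integrableOn_Ioi_ofReal_add_cpow hz (by rwa [neg_re, neg_lt_neg_iff]))
    ((tendsto_ofReal_add_cpow_atTop z (by rwa [sub_re, one_re, sub_neg])).div_const (1 - s)),
    zero_div, zero_sub, ofReal_zero, zero_add, ← div_neg, neg_sub]

lemma hasDerivAt_ascPochhammer_mul_ofReal_add_cpow (hz : z ∈ slitPlane) (s : ℂ) (k : ℕ) {x : ℝ}
    (hx : 0 ≤ x) :
    HasDerivAt (fun y : ℝ => (-1) ^ k * (ascPochhammer ℂ k).eval s * ((y : ℂ) + z) ^ (-s - k))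
      ((-1) ^ (k + 1) * (ascPochhammer ℂ (k + 1)).eval s
        * ((x : ℂ) + z) ^ (-s - (k + 1 : ℕ))) x := by
  refine ((hasDerivAt_ofReal_add_cpow hz (-s - k) hx).const_mul _).congr_deriv ?_
  rw [ascPochhammer_succ_eval, pow_succ, Nat.cast_add_one, ← sub_sub]
  ring

lemma integrableOn_Ioi_ofReal_add_cpow_neg_sub_nat (hz : z ∈ slitPlane) {s : ℂ} (hs : 1 < s.re)
    (k : ℕ) : IntegrableOn (fun x : ℝ => ((x : ℂ) + z) ^ (-s - k)) (Ioi 0) :=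
  integrableOn_Ioi_ofReal_add_cpow hz <| by
    rw [sub_re, neg_re, natCast_re]
    linarith [k.cast_nonneg (α := ℝ)]

lemma neg_one_pow_mul_smul_neg_one_pow_mul (k : ℕ) (a : ℝ) (w : ℂ) :
    ((-1) ^ k * a) • ((-1) ^ k * w) = a * w := by
  rw [real_smul, ofReal_mul, mul_mul_mul_comm, ofReal_pow, ofReal_neg, ofReal_one, ← mul_pow,
    neg_mul_neg, mul_one, one_pow, one_mul]

theorem hasSum_nat_add_cpow_neg (hz : z ∈ slitPlane) {s : ℂ} (hs : 1 < s.re) (M : ℕ) :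
    HasSum (fun n : ℕ => ((n : ℂ) + z) ^ (-s))
      (z ^ (1 - s) / (s - 1) + z ^ (-s) / 2
        + (∑ k ∈ Finset.Icc 1 M,
            bernoulli (k + 1) / (k + 1)! * (ascPochhammer ℂ k).eval s * z ^ (-s - k))
        - (ascPochhammer ℂ (M + 1)).eval s / (M + 1)! * ∫ x in Ioi (0 : ℝ),
            (periodicBernoulli (M + 1) x : ℂ) * ((x : ℂ) + z) ^ (-s - (M + 1 : ℕ))) := by
  have hsum := hasSum_nat_eulerMaclaurin M
    (fun k _ x hx => (hasDerivAt_ascPochhammer_mul_ofReal_add_cpow hz s k hx).hasDerivWithinAt)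
    (fun k _ => (integrableOn_Ioi_ofReal_add_cpow_neg_sub_nat hz hs k).const_mul _)
  have hmain : ∫ x in Ioi (0 : ℝ), (-1) ^ 0 * (ascPochhammer ℂ 0).eval s
      * ((x : ℂ) + z) ^ (-s - (0 : ℕ)) = z ^ (1 - s) / (s - 1) := by
    simpa using integral_Ioi_ofReal_add_cpow_neg hz hs
  have hterm (k : ℕ) : ((-1) ^ k * bernoulli (k + 1) / (k + 1)! : ℝ) •
      ((-1) ^ k * (ascPochhammer ℂ k).eval s * (((0 : ℝ) : ℂ) + z) ^ (-s - k))
        = bernoulli (k + 1) / (k + 1)! * (ascPochhammer ℂ k).eval s * z ^ (-s - k) := by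
    rw [mul_div_assoc, mul_assoc ((-1) ^ k), neg_one_pow_mul_smul_neg_one_pow_mul, ofReal_zero,
      zero_add, ← mul_assoc]
    norm_cast
  have hremainder : ((-1) ^ M / (M + 1)! : ℝ) • ∫ x in Ioi (0 : ℝ), periodicBernoulli (M + 1) x •
      ((-1) ^ (M + 1) * (ascPochhammer ℂ (M + 1)).eval s * ((x : ℂ) + z) ^ (-s - (M + 1 : ℕ)))
        = -((ascPochhammer ℂ (M + 1)).eval s / (M + 1)! * ∫ x in Ioi (0 : ℝ),
          (periodicBernoulli (M + 1) x : ℂ) * ((x : ℂ) + z) ^ (-s - (M + 1 : ℕ))) := by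
    simp_rw [← mul_smul_comm, integral_const_mul, real_smul (x := periodicBernoulli _ _)]
    rw [pow_succ, mul_neg_one, neg_mul, neg_mul, smul_neg, mul_assoc, div_eq_mul_inv,
      neg_one_pow_mul_smul_neg_one_pow_mul, ofReal_inv, ofReal_natCast, ← mul_assoc, inv_mul_eq_div]
  simp only [hmain, hterm, hremainder] at hsum
  simpa [sub_eq_add_neg, div_eq_inv_mul] using hsum

end ComplexPower

theorem hurwitz_euler_maclaurin_general {z s : ℂ} (hz : z ∈ slitPlane) (hs : 1 < s.re) (M : ℕ) :
    IntegrableOn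
      (fun x : ℝ => (periodicBernoulli (M + 1) x : ℂ) * ((x : ℂ) + z) ^ (-s - (M : ℂ) - 1))
      (Ioi 0) ∧
    HasSum (fun n : ℕ => ((n : ℂ) + z) ^ (-s))
      (z ^ (1 - s) / (s - 1) + z ^ (-s) / 2
        + (∑ k ∈ Finset.Icc 1 M,
            ((bernoulli (k + 1) : ℂ) / ((k + 1).factorial : ℂ)) *
              (ascPochhammer ℂ k).eval s * z ^ (-s - (k : ℂ)))
        - ((ascPochhammer ℂ (M + 1)).eval s / ((M + 1).factorial : ℂ)) *
            ∫ x in Ioi (0 : ℝ),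
              (periodicBernoulli (M + 1) x : ℂ) * ((x : ℂ) + z) ^ (-s - (M : ℂ) - 1)) := by
  rw [sub_sub, ← Nat.cast_add_one]
  have hremainder := integrable_periodicBernoulli_smul
    (integrableOn_Ioi_ofReal_add_cpow_neg_sub_nat hz hs (M + 1)) (M + 1)
  simp only [real_smul] at hremainder
  exact ⟨hremainder, hasSum_nat_add_cpow_neg hz hs M⟩

/-- Euler–Maclaurin expansion of the Hurwitz zeta function: for `Re z > 0`, `Re s > 1`
and any integer `M ≥ 0`,
`∑_{n≥0} (n+z)^{−s} = z^{1−s}/(s−1) + z^{−s}/2 + ∑_{k=1}^{M} (B_{k+1}/(k+1)!)(s)_k z^{−s−k}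
  − ((s)_{M+1}/(M+1)!) ∫_0^∞ B̃_{M+1}(x) (x+z)^{−s−M−1} dx`,
the integral converging absolutely. -/
theorem hurwitz_euler_maclaurin (z s : ℂ) (hz : 0 < z.re) (hs : 1 < s.re) (M : ℕ) :
    MeasureTheory.IntegrableOn
      (fun x : ℝ => (periodicBernoulli (M + 1) x : ℂ) * ((x : ℂ) + z) ^ (-s - (M : ℂ) - 1))
      (Set.Ioi 0) ∧
    ∑' n : ℕ, ((n : ℂ) + z) ^ (-s)
      = z ^ (1 - s) / (s - 1) + z ^ (-s) / 2
        + (∑ k ∈ Finset.Icc 1 M,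
            ((bernoulli (k + 1) : ℂ) / ((k + 1).factorial : ℂ)) *
              (ascPochhammer ℂ k).eval s * z ^ (-s - (k : ℂ)))
        - ((ascPochhammer ℂ (M + 1)).eval s / ((M + 1).factorial : ℂ)) *
            ∫ x in Set.Ioi (0 : ℝ),
              (periodicBernoulli (M + 1) x : ℂ) * ((x : ℂ) + z) ^ (-s - (M : ℂ) - 1) :=
  (hurwitz_euler_maclaurin_general (Or.inl hz) hs M).imp_right HasSum.tsum_eq
end

section
/- Let q be real with 0 < q < 1. Then for every real z > 0 one has F_q(z+1) = F_q(z) + q^{−z} · (log [z]_q − z · log q), and F_q(1) = 0; equivalently, Γ̃_q(z+1) = (q^{−z}·[z]_q)^{q^{−z}} · Γ̃_q(z) and Γ̃_q(1) = 1. -/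
/-!
Put `x = q ^ z ∈ (0, 1)`, so that `z ↦ z + 1` becomes `x ↦ x * q`. In the `n`-th term of the series
of `F_q` this changes the numerator by `-x ^ (n + 1) * (1 - q ^ (n + 1))`, which cancels the
denominator: what remains is `-x ^ (n + 1) / (n + 2)`, and these add up to the Mercator series of
`log (1 - x) / x` without its leading term `-1`. The elementary part of `F_q` supplies the remaining
logarithms, and its summand `-z` absorbs that leading term.
-/

/-- The logarithm `F_q(z) = log Γ̃_q(z)` of the `q`-gamma function associated with the
`q`-Hurwitz zeta function, given by its explicit closed form: for real `z > 0`,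
`F_q(z) = ∑_{n=2}^∞ (1/n)(q^{z(n−1)} − q^{n−1})/(1 − q^{n−1}) − z + 1
  + ((q^{−z}(1 − (1−q)z) − 1)/(1−q)²) q log q + ((1 − q^{1−z})/(1−q)) log(1−q)`
(real powers of `q` via `rpow`). -/
noncomputable def Fq (q z : ℝ) : ℝ :=
  (∑' n : ℕ, (1 / ((n : ℝ) + 2)) *
      (q ^ (z * ((n : ℝ) + 1)) - q ^ ((n : ℝ) + 1)) / (1 - q ^ ((n : ℝ) + 1)))
    - z + 1
    + ((q ^ (-z) * (1 - (1 - q) * z) - 1) / (1 - q) ^ 2) * q * Real.log q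
    + ((1 - q ^ (1 - z)) / (1 - q)) * Real.log (1 - q)

/-- The `q`-gamma function `Γ̃_q(z) = exp F_q(z)` associated with the `q`-Hurwitz zeta
function. -/
noncomputable def GammaQ (q z : ℝ) : ℝ := Real.exp (Fq q z)

open Filter Topology

/-- The `n`-th term of the series of `F_q(z)` as a rational function of `q` and `x = q ^ z`; the
index is shifted by two from the paper's, so that the series starts at `n = 0`. -/
def qGammaTerm {𝕜 : Type*} [Field 𝕜] (q x : 𝕜) (n : ℕ) : 𝕜 :=
  (x ^ (n + 1) - q ^ (n + 1)) / ((n + 2) * (1 - q ^ (n + 1)))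

/-- The part of the closed form of `F_q(z)` outside the series. -/
noncomputable def FqElementary (q z : ℝ) : ℝ :=
  -z + 1
    + (q ^ (-z) * (1 - (1 - q) * z) - 1) / (1 - q) ^ 2 * q * Real.log q
    + (1 - q ^ (1 - z)) / (1 - q) * Real.log (1 - q)

lemma qGammaTerm_self {𝕜 : Type*} [Field 𝕜] (q : 𝕜) (n : ℕ) : qGammaTerm q q n = 0 := by
  simp [qGammaTerm]

lemma qGammaTerm_mul_sub {𝕜 : Type*} [Field 𝕜] {q : 𝕜} (x : 𝕜) {n : ℕ} (hq : q ^ (n + 1) ≠ 1) :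
    qGammaTerm q (x * q) n - qGammaTerm q x n = -(x ^ (n + 1) / (n + 2)) := by
  have hnum : (x * q) ^ (n + 1) - q ^ (n + 1) - (x ^ (n + 1) - q ^ (n + 1))
      = -x ^ (n + 1) * (1 - q ^ (n + 1)) := by ring
  rw [qGammaTerm, qGammaTerm, ← sub_div, hnum,
    mul_div_mul_right _ _ (sub_ne_zero.mpr hq.symm), neg_div]

lemma summable_qGammaTerm {𝕜 : Type*} [RCLike 𝕜] {q x : 𝕜} (hq : ‖q‖ < 1) (hx : ‖x‖ < 1) :
    Summable (qGammaTerm q x) := by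
  have hpow {y : 𝕜} (hy : ‖y‖ < 1) : Summable fun n : ℕ ↦ ‖y ^ (n + 1)‖ :=
    (summable_nat_add_iff (f := fun n ↦ ‖y ^ n‖) 1).mpr
      (summable_norm_geometric_of_norm_lt_one hy)
  have hnum : Summable fun n : ℕ ↦ ‖x ^ (n + 1) - q ^ (n + 1)‖ :=
    ((hpow hx).add (hpow hq)).of_nonneg_of_le (fun _ ↦ norm_nonneg _) fun _ ↦ norm_sub_le _ _
  have hlin : Tendsto (fun n : ℕ ↦ ((n : 𝕜) + 2)⁻¹) atTop (𝓝 0) := by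
    simpa using (tendsto_add_atTop_iff_nat 2).mpr (tendsto_inv_atTop_nhds_zero_nat (𝕜 := 𝕜))
  have hgeom : Tendsto (fun n : ℕ ↦ (1 - q ^ (n + 1))⁻¹) atTop (𝓝 1) := by
    simpa using (((tendsto_add_atTop_iff_nat 1).mpr
      (tendsto_pow_atTop_nhds_zero_of_norm_lt_one hq)).const_sub 1).inv₀ (by simp)
  have hcoeff := hlin.mul hgeom
  rw [← Nat.cofinite_eq_atTop] at hcoeff
  exact (hnum.mul_tendsto_const hcoeff).congr fun n ↦ by
    rw [qGammaTerm, div_eq_mul_inv, mul_inv]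

lemma hasSum_pow_div_add_two {x : ℝ} (hx : |x| < 1) :
    HasSum (fun n : ℕ ↦ x ^ (n + 2) / (n + 2)) (-Real.log (1 - x) - x) := by
  have h := (hasSum_nat_add_iff' 1).mpr (Real.hasSum_pow_div_log_of_abs_lt_one hx)
  simpa [add_assoc, one_add_one_eq_two] using h

lemma tsum_qGammaTerm_mul {q x : ℝ} (hq : |q| < 1) (hx : |x| < 1) (hx0 : x ≠ 0) :
    ∑' n, qGammaTerm q (x * q) n = ∑' n, qGammaTerm q x n + (1 + x⁻¹ * Real.log (1 - x)) := by
  have hxq : |x * q| < 1 := by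
    rw [abs_mul]
    exact mul_lt_one_of_nonneg_of_lt_one_left (abs_nonneg x) hx hq.le
  have hterm (n : ℕ) : qGammaTerm q (x * q) n - qGammaTerm q x n
      = -x⁻¹ * (x ^ (n + 2) / (n + 2)) := by
    have hqn : |q ^ (n + 1)| < 1 := by
      rw [abs_pow]
      exact pow_lt_one₀ (abs_nonneg q) hq n.succ_ne_zero
    rw [qGammaTerm_mul_sub x (lt_of_abs_lt hqn).ne]
    field_simp
    ring
  have hmercator : ∑' n : ℕ, -x⁻¹ * (x ^ (n + 2) / (n + 2)) = 1 + x⁻¹ * Real.log (1 - x) := by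
    rw [tsum_mul_left, (hasSum_pow_div_add_two hx).tsum_eq]
    field_simp
    ring
  have hsummable {y : ℝ} (hy : |y| < 1) : Summable (qGammaTerm q y) := summable_qGammaTerm hq hy
  rw [← sub_eq_iff_eq_add', ← (hsummable hxq).tsum_sub (hsummable hx), ← hmercator]
  exact tsum_congr hterm

lemma Fq_eq_tsum_add_FqElementary {q : ℝ} (hq0 : 0 ≤ q) (z : ℝ) :
    Fq q z = ∑' n, qGammaTerm q (q ^ z) n + FqElementary q z := by
  have hterm (n : ℕ) :
      1 / ((n : ℝ) + 2) * (q ^ (z * ((n : ℝ) + 1)) - q ^ ((n : ℝ) + 1)) / (1 - q ^ ((n : ℝ) + 1))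
        = qGammaTerm q (q ^ z) n := by
    rw [Real.rpow_mul hq0, ← Nat.cast_succ, Real.rpow_natCast, Real.rpow_natCast, qGammaTerm,
      one_div_mul_eq_div, div_div]
  simp only [Fq, FqElementary, hterm]
  ring

lemma FqElementary_one {q : ℝ} (hq0 : q ≠ 0) : FqElementary q 1 = 0 := by
  simp [FqElementary, Real.rpow_neg_one, hq0]

lemma FqElementary_add_one {q : ℝ} (hq0 : 0 < q) (hq1 : q ≠ 1) (z : ℝ) :
    FqElementary q (z + 1)
      = FqElementary q z - 1 - q ^ (-z) * (z * Real.log q + Real.log (1 - q)) := by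
  have hneg : q ^ (-(z + 1)) = q ^ (-z) * q⁻¹ := by
    rw [neg_add, Real.rpow_add hq0, Real.rpow_neg_one]
  have hsub : q ^ (1 - z) = q * q ^ (-z) := by
    rw [sub_eq_add_neg, Real.rpow_add hq0, Real.rpow_one]
  have hsub' : q ^ (1 - (z + 1)) = q ^ (-z) := by
    congr 1
    ring
  have h1q : 1 - q ≠ 0 := sub_ne_zero.mpr hq1.symm
  rw [FqElementary, FqElementary, hneg, hsub, hsub']
  field_simp
  ring

lemma Fq_one {q : ℝ} (hq0 : 0 < q) : Fq q 1 = 0 := by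
  simp [Fq_eq_tsum_add_FqElementary hq0.le, qGammaTerm_self, FqElementary_one hq0.ne']

lemma Fq_add_one {q z : ℝ} (hq0 : 0 < q) (hq1 : q < 1) (hz : 0 < z) :
    Fq q (z + 1)
      = Fq q z + q ^ (-z) * (Real.log ((1 - q ^ z) / (1 - q)) - z * Real.log q) := by
  have hx0 : 0 < q ^ z := Real.rpow_pos_of_pos hq0 z
  have hx1 : q ^ z < 1 := Real.rpow_lt_one hq0.le hq1 hz
  have hseries := tsum_qGammaTerm_mul (abs_lt.mpr ⟨by linarith, hq1⟩)
    (abs_lt.mpr ⟨by linarith, hx1⟩) hx0.ne'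
  rw [← Real.rpow_add_one hq0.ne', ← Real.rpow_neg hq0.le] at hseries
  rw [Fq_eq_tsum_add_FqElementary hq0.le, Fq_eq_tsum_add_FqElementary hq0.le, hseries,
    FqElementary_add_one hq0 hq1.ne, Real.log_div (sub_pos.mpr hx1).ne' (sub_pos.mpr hq1).ne']
  ring

lemma GammaQ_one {q : ℝ} (hq0 : 0 < q) : GammaQ q 1 = 1 := by
  rw [GammaQ, Fq_one hq0, Real.exp_zero]

lemma GammaQ_add_one {q z : ℝ} (hq0 : 0 < q) (hq1 : q < 1) (hz : 0 < z) :
    GammaQ q (z + 1) = (q ^ (-z) * ((1 - q ^ z) / (1 - q))) ^ (q ^ (-z)) * GammaQ q z := by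
  have hpow : 0 < q ^ (-z) := Real.rpow_pos_of_pos hq0 _
  have hbracket : 0 < (1 - q ^ z) / (1 - q) :=
    div_pos (sub_pos.mpr (Real.rpow_lt_one hq0.le hq1 hz)) (sub_pos.mpr hq1)
  have hlog : Real.log (q ^ (-z) * ((1 - q ^ z) / (1 - q)))
      = Real.log ((1 - q ^ z) / (1 - q)) - z * Real.log q := by
    rw [Real.log_mul hpow.ne' hbracket.ne', Real.log_rpow hq0]
    ring
  rw [GammaQ, GammaQ, Fq_add_one hq0 hq1 hz, Real.rpow_def_of_pos (mul_pos hpow hbracket), hlog,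
    ← Real.exp_add]
  congr 1
  ring

/-- For `0 < q < 1`: for all real `z > 0`,
`F_q(z+1) = F_q(z) + q^{−z}(log [z]_q − z log q)` and `F_q(1) = 0`; equivalently,
`Γ̃_q(z+1) = (q^{−z}[z]_q)^{q^{−z}} Γ̃_q(z)` and `Γ̃_q(1) = 1`. -/
theorem Fq_ladder_and_one (q : ℝ) (hq0 : 0 < q) (hq1 : q < 1) :
    (∀ z : ℝ, 0 < z →
      Fq q (z + 1)
        = Fq q z + q ^ (-z) * (Real.log ((1 - q ^ z) / (1 - q)) - z * Real.log q)) ∧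
    Fq q 1 = 0 ∧
    (∀ z : ℝ, 0 < z →
      GammaQ q (z + 1)
        = (q ^ (-z) * ((1 - q ^ z) / (1 - q))) ^ (q ^ (-z)) * GammaQ q z) ∧
    GammaQ q 1 = 1 :=
  ⟨fun _ hz ↦ Fq_add_one hq0 hq1 hz, Fq_one hq0, fun _ hz ↦ GammaQ_add_one hq0 hq1 hz,
    GammaQ_one hq0⟩
end

section
/- Let q be real with 0 < q < 1. Then the function z ↦ F_q(z+1) = log Γ̃_q(z+1) is convex on the interval [0, ∞). -/
/-!
Up to an affine function, `z ↦ F_q(z + 1)` is the sum of the series and of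
`(-log q / (1 - q)²) q^(-z) ((1 - q) z - q) + (-log (1 - q) / (1 - q)) q^(-z)`.
The terms of the series and `q^(-z)` are exponentials with nonnegative coefficients up to constants,
hence convex. With `L = -log q`, the second derivative of the remaining piece
`q^(-z) ((1 - q) z - q)` is `L q^(-z) (L ((1 - q) z - q) + 2 (1 - q))`, which is nonnegative
as soon as `z ≥ q / (1 - q) - 2 / L`. This bound is negative because `q L ≤ 1 - q`.
-/

theorem convexOn_of_hasSum {𝕜 E β ι : Type*} [Semiring 𝕜] [PartialOrder 𝕜] [AddCommMonoid E]
    [SMul 𝕜 E] [AddCommMonoid β] [PartialOrder β] [IsOrderedAddMonoid β] [TopologicalSpace β]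
    [OrderClosedTopology β] [ContinuousAdd β] [DistribSMul 𝕜 β] [ContinuousConstSMul 𝕜 β]
    {s : Set E} {f : ι → E → β} {g : E → β} (hs : Convex 𝕜 s) (hf : ∀ i, ConvexOn 𝕜 s (f i))
    (hfg : ∀ x ∈ s, HasSum (fun i => f i x) (g x)) : ConvexOn 𝕜 s g :=
  ⟨hs, fun x hx y hy a b ha hb hab =>
    hasSum_le (fun i => (hf i).2 hx hy ha hb hab) (hfg _ (hs hx hy ha hb hab))
      (((hfg x hx).const_smul a).add ((hfg y hy).const_smul b))⟩

theorem hasDerivAt_rpow_mul_affine {b : ℝ} (hb : 0 < b) (m k x : ℝ) :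
    HasDerivAt (fun x => b ^ x * (m * x + k))
      (b ^ x * (Real.log b * m * x + (Real.log b * k + m))) x := by
  have hpow : HasDerivAt (fun x => b ^ x) (Real.log b * 1 * b ^ x) x :=
    (hasDerivAt_id x).const_rpow hb
  have haffine : HasDerivAt (fun x => m * x + k) m x := by
    simpa using ((hasDerivAt_id x).const_mul m).add_const k
  exact (hpow.mul haffine).congr_deriv (by ring)

theorem convexOn_rpow_mul_affine {b m k : ℝ} (hb : 0 < b) {s : Set ℝ} (hs : Convex ℝ s)
    (hnonneg : ∀ x ∈ s, 0 ≤ Real.log b * (Real.log b * (m * x + k) + 2 * m)) :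
    ConvexOn ℝ s (fun x => b ^ x * (m * x + k)) := by
  refine convexOn_of_hasDerivWithinAt2_nonneg hs
    (fun x _ => (hasDerivAt_rpow_mul_affine hb m k x).continuousAt.continuousWithinAt)
    (fun x _ => (hasDerivAt_rpow_mul_affine hb m k x).hasDerivWithinAt)
    (fun x _ => (hasDerivAt_rpow_mul_affine hb _ _ x).hasDerivWithinAt) fun x hx => ?_
  refine mul_nonneg (Real.rpow_nonneg hb.le x) ((hnonneg x (interior_subset hx)).trans_eq ?_)
  ring

/-- The term of index `n + 2` of the series in `Fq q z`, the index being shifted as in `Fq`. -/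
noncomputable def FqTerm (q : ℝ) (n : ℕ) (z : ℝ) : ℝ :=
  (1 / ((n : ℝ) + 2)) *
    (q ^ (z * ((n : ℝ) + 1)) - q ^ ((n : ℝ) + 1)) / (1 - q ^ ((n : ℝ) + 1))

section

variable {q : ℝ}

theorem FqTerm_eq (hq0 : 0 ≤ q) (n : ℕ) (z : ℝ) :
    FqTerm q n z = 1 / ((n : ℝ) + 2) / (1 - q ^ (n + 1)) * ((q ^ (n + 1)) ^ z - q ^ (n + 1)) := by
  have hpow : q ^ (z * ((n : ℝ) + 1)) = (q ^ (n + 1)) ^ z := by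
    rw [mul_comm, ← Nat.cast_succ, Real.rpow_natCast_mul hq0]
  rw [FqTerm, hpow, ← Nat.cast_succ, Real.rpow_natCast, mul_div_right_comm]

theorem convexOn_FqTerm (hq0 : 0 < q) (hq1 : q < 1) (n : ℕ) :
    ConvexOn ℝ Set.univ (FqTerm q n) := by
  have hden : 0 < 1 - q ^ (n + 1) := sub_pos.2 (pow_lt_one₀ hq0.le hq1 n.succ_ne_zero)
  have hcoeff : 0 ≤ 1 / ((n : ℝ) + 2) / (1 - q ^ (n + 1)) := by positivity
  refine (((convexOn_rpow_left (pow_pos hq0 (n + 1))).add_const (-q ^ (n + 1))).smul hcoeff).congr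
    fun z _ => ?_
  simp only [Pi.add_apply, smul_eq_mul, FqTerm_eq hq0.le, sub_eq_add_neg]

theorem abs_FqTerm_le (hq0 : 0 ≤ q) (hq1 : q < 1) (n : ℕ) (z : ℝ) :
    |FqTerm q n z| ≤ 1 / (1 - q) * ((q ^ z) ^ (n + 1) + q ^ (n + 1)) := by
  have hpow : (q ^ (n + 1)) ^ z = (q ^ z) ^ (n + 1) := (Real.rpow_pow_comm hq0 z (n + 1)).symm
  have hone_sub : 0 < 1 - q := sub_pos.2 hq1
  have hden : 1 - q ≤ 1 - q ^ (n + 1) :=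
    sub_le_sub_left (pow_le_of_le_one hq0 hq1.le n.succ_ne_zero) 1
  have hcoeff : 1 / ((n : ℝ) + 2) ≤ 1 := by
    rw [div_le_one (by positivity)]
    linarith [n.cast_nonneg (α := ℝ)]
  have hdiff : |(q ^ z) ^ (n + 1) - q ^ (n + 1)| ≤ (q ^ z) ^ (n + 1) + q ^ (n + 1) :=
    (abs_sub _ _).trans_eq (by rw [abs_of_nonneg (by positivity), abs_of_nonneg (by positivity)])
  rw [FqTerm_eq hq0, hpow, abs_mul,
    abs_of_nonneg (div_nonneg (by positivity) (hone_sub.le.trans hden))]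
  gcongr

theorem summable_FqTerm (hq0 : 0 < q) (hq1 : q < 1) {z : ℝ} (hz : 0 < z) :
    Summable (fun n => FqTerm q n z) := by
  have hgeom {r : ℝ} (hr0 : 0 ≤ r) (hr1 : r < 1) : Summable (fun n : ℕ => r ^ (n + 1)) :=
    (summable_nat_add_iff 1).2 (summable_geometric_of_lt_one hr0 hr1)
  have hbound : Summable fun n : ℕ => 1 / (1 - q) * ((q ^ z) ^ (n + 1) + q ^ (n + 1)) :=
    ((hgeom (Real.rpow_nonneg hq0.le z) (Real.rpow_lt_one hq0.le hq1 hz)).add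
      (hgeom hq0.le hq1)).mul_left _
  exact hbound.of_norm_bounded fun n => abs_FqTerm_le hq0.le hq1 n z

theorem convexOn_tsum_FqTerm (hq0 : 0 < q) (hq1 : q < 1) :
    ConvexOn ℝ (Set.Ioi 0) (fun z => ∑' n, FqTerm q n z) :=
  convexOn_of_hasSum (convex_Ioi 0)
    (fun n => (convexOn_FqTerm hq0 hq1 n).subset (Set.subset_univ _) (convex_Ioi 0))
    fun _ hz => (summable_FqTerm hq0 hq1 hz).hasSum

theorem Fq_succ_eq (hq0 : q ≠ 0) (hq1 : q ≠ 1) (z : ℝ) :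
    Fq q (z + 1) = ∑' n, FqTerm q n (z + 1)
      + -Real.log q / (1 - q) ^ 2 * (q⁻¹ ^ z * ((1 - q) * z + -q))
      + -Real.log (1 - q) / (1 - q) * q⁻¹ ^ z
      + -z + (Real.log (1 - q) / (1 - q) - q * Real.log q / (1 - q) ^ 2) := by
  have hone_sub : 1 - q ≠ 0 := sub_ne_zero.2 hq1.symm
  have hpow_neg : q ^ (-(z + 1)) = q⁻¹ ^ z * q⁻¹ := by
    rw [Real.rpow_neg_eq_inv_rpow, Real.rpow_add_one (inv_ne_zero hq0)]
  have hpow_one_sub : q ^ (1 - (z + 1)) = q⁻¹ ^ z := by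
    rw [← Real.rpow_neg_eq_inv_rpow]
    congr 1
    ring
  simp only [Fq, FqTerm, hpow_neg, hpow_one_sub]
  field_simp
  ring

theorem convexOn_inv_rpow_mul_affine (hq0 : 0 < q) (hq1 : q < 1) :
    ConvexOn ℝ (Set.Ici (q / (1 - q) + 2 / Real.log q))
      (fun z => q⁻¹ ^ z * ((1 - q) * z + -q)) := by
  refine convexOn_rpow_mul_affine (inv_pos.2 hq0) (convex_Ici _) fun z hz => ?_
  have hlog : Real.log q < 0 := Real.log_neg hq0 hq1
  have hone_sub : 0 < 1 - q := sub_pos.2 hq1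
  have hfactor : -Real.log q * (-Real.log q * ((1 - q) * z + -q) + 2 * (1 - q)) =
      Real.log q ^ 2 * (1 - q) * (z - (q / (1 - q) + 2 / Real.log q)) := by
    field_simp [hlog.ne]
    ring
  rw [Real.log_inv, hfactor]
  exact mul_nonneg (by positivity) (sub_nonneg.2 hz)

theorem div_one_sub_add_two_div_log_neg (hq0 : 0 < q) (hq1 : q < 1) :
    q / (1 - q) + 2 / Real.log q < 0 := by
  have hlog : Real.log q < 0 := Real.log_neg hq0 hq1
  have hone_sub : 0 < 1 - q := sub_pos.2 hq1
  have hmul_log : q - 1 ≤ q * Real.log q :=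
    calc q - 1 = q * (1 - q⁻¹) := by field_simp
      _ ≤ q * Real.log q := by gcongr; exact Real.one_sub_inv_le_log_of_pos hq0
  rw [div_add_div _ _ hone_sub.ne' hlog.ne]
  exact div_neg_of_pos_of_neg (by linarith) (mul_neg_of_pos_of_neg hone_sub hlog)

end

theorem convexOn_Fq_succ_general (q : ℝ) (hq0 : 0 < q) (hq1 : q < 1) :
    ConvexOn ℝ (Set.Ioi (-1) ∩ Set.Ici (q / (1 - q) + 2 / Real.log q))
      (fun z : ℝ => Fq q (z + 1)) := by
  have hlog : 0 < -Real.log q := neg_pos.2 (Real.log_neg hq0 hq1)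
  have hone_sub : 0 < 1 - q := sub_pos.2 hq1
  have hlog_one_sub : 0 < -Real.log (1 - q) := neg_pos.2 (Real.log_neg hone_sub (by linarith))
  have hs : Convex ℝ (Set.Ioi (-1) ∩ Set.Ici (q / (1 - q) + 2 / Real.log q)) :=
    (convex_Ioi _).inter (convex_Ici _)
  have hseries := ((convexOn_tsum_FqTerm hq0 hq1).translate_left 1).subset
    (fun _ hz => neg_lt_iff_pos_add'.1 (Set.mem_Ioi.1 hz.1)) hs
  have haffine := ((convexOn_inv_rpow_mul_affine hq0 hq1).subset Set.inter_subset_right hs).smul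
    (c := -Real.log q / (1 - q) ^ 2) (by positivity)
  have hpow := ((convexOn_rpow_left (inv_pos.2 hq0)).subset (Set.subset_univ _) hs).smul
    (c := -Real.log (1 - q) / (1 - q)) (by positivity)
  exact ((((hseries.add haffine).add hpow).add (concaveOn_id hs).neg).add_const _).congr
    fun z _ => (Fq_succ_eq hq0.ne' hq1.ne z).symm

/-- For `0 < q < 1`, the function `z ↦ F_q(z+1) = log Γ̃_q(z+1)` is convex on `[0, ∞)`. -/
theorem convexOn_Fq_succ (q : ℝ) (hq0 : 0 < q) (hq1 : q < 1) :
    ConvexOn ℝ (Set.Ici (0 : ℝ)) (fun z : ℝ => Fq q (z + 1)) := by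
  refine (convexOn_Fq_succ_general q hq0 hq1).subset (fun z (hz : 0 ≤ z) => ?_) (convex_Ici 0)
  exact ⟨Set.mem_Ioi.2 (by linarith), (div_one_sub_add_two_div_log_neg hq0 hq1).le.trans hz⟩
end
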